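/- arXiv:2401.01077 — 2 statements merged into one kernel-verified Lean document; each statement's English description precedes it below -/
import Mathlib

section
/- Let n and T be positive integers, let H = ℝⁿ with the Euclidean inner product, and let C ⊆ H be a nonempty convex set whose diameter is at most F, i.e. ‖u − v‖ ≤ F for all u, v ∈ C. Let P : H → H be a map satisfying: for every z ∈ H, P z ∈ C and ‖P z − u‖ ≤ ‖z − u‖ for all u ∈ C. Let h_1,…,h_T : H → ℝ, let c_1 ∈ C, and let g_1,…,g_T ∈ H be subgradients with ‖g_t‖ ≤ G and h_t(u) ≥ h_t(c_t) + ⟨g_t, u − c_t⟩ for all u ∈ C and all t. Define the online gradient descent iterates c_{t+1} = P(c_t − η_t g_t) with step sizes η_t = 1/√t. Then for every u ∈ C, ∑_{t=1}^T h_t(c_t) − ∑_{t=1}^T h_t(u) ≤ (F²/2 + G²) · √T. -/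
/-- Regret bound of Online Gradient Descent with step sizes `η_t = 1/√t`. -/
theorem stmt6
    (n T : ℕ) (hn : 0 < n) (hT : 0 < T)
    (C : Set (EuclideanSpace ℝ (Fin n))) (hCne : C.Nonempty) (hCconv : Convex ℝ C)
    (F G : ℝ)
    (hdiam : ∀ u ∈ C, ∀ v ∈ C, ‖u - v‖ ≤ F)
    (P : EuclideanSpace ℝ (Fin n) → EuclideanSpace ℝ (Fin n))
    (hPmem : ∀ z, P z ∈ C)
    (hPnonexp : ∀ z, ∀ u ∈ C, ‖P z - u‖ ≤ ‖z - u‖)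
    (h : ℕ → EuclideanSpace ℝ (Fin n) → ℝ)
    (c g : ℕ → EuclideanSpace ℝ (Fin n))
    (hc1 : c 1 ∈ C)
    (hgbound : ∀ t ∈ Finset.Icc 1 T, ‖g t‖ ≤ G)
    (hsubgrad : ∀ t ∈ Finset.Icc 1 T, ∀ u ∈ C,
      h t (c t) + (inner ℝ (g t) (u - c t) : ℝ) ≤ h t u)
    (hstep : ∀ t ∈ Finset.Icc 1 T,
      c (t + 1) = P (c t - (1 / Real.sqrt t) • g t)) :
    ∀ u ∈ C, ∑ t ∈ Finset.Icc 1 T, h t (c t) - ∑ t ∈ Finset.Icc 1 T, h t u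
      ≤ (F ^ 2 / 2 + G ^ 2) * Real.sqrt T := by
  intro u hu
  have hmem : ∀ m, m ≤ T → c (m + 1) ∈ C := by
    intro m hm
    rcases Nat.eq_zero_or_pos m with h0 | h0
    · subst h0; simpa using hc1
    · rw [hstep m (Finset.mem_Icc.mpr ⟨h0, hm⟩)]
      exact hPmem _
  have key : ∀ m, m ≤ T →
      ∑ t ∈ Finset.Icc 1 m, h t (c t) - ∑ t ∈ Finset.Icc 1 m, h t u
        ≤ (F ^ 2 / 2 + G ^ 2) * Real.sqrt m - Real.sqrt m / 2 * ‖c (m + 1) - u‖ ^ 2 := by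
    intro m
    induction m with
    | zero => intro _; simp
    | succ m ih =>
      intro hm
      have ih := ih (by omega)
      have hI : m + 1 ∈ Finset.Icc 1 T := Finset.mem_Icc.mpr ⟨by omega, hm⟩
      rw [Finset.sum_Icc_succ_top (by omega), Finset.sum_Icc_succ_top (by omega)]
      have hsub := hsubgrad _ hI u hu
      have hg := hgbound _ hI
      have hD := hdiam _ (hmem m (by omega)) u hu
      have hD' := hPnonexp (c (m + 1) - (1 / Real.sqrt ((m + 1 : ℕ) : ℝ)) • g (m + 1)) u hu
      rw [← hstep _ hI] at hD'
      have hr0 : 0 ≤ Real.sqrt (m : ℝ) := Real.sqrt_nonneg _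
      have hs0 : 0 < Real.sqrt ((m + 1 : ℕ) : ℝ) := Real.sqrt_pos.mpr (by positivity)
      have hr2 : Real.sqrt (m : ℝ) ^ 2 = m := Real.sq_sqrt (by positivity)
      have hs2 : Real.sqrt ((m + 1 : ℕ) : ℝ) ^ 2 = m + 1 := by
        rw [Real.sq_sqrt (by positivity)]; push_cast; ring
      have hrs : Real.sqrt (m : ℝ) ≤ Real.sqrt ((m + 1 : ℕ) : ℝ) :=
        Real.sqrt_le_sqrt (by push_cast; linarith)
      generalize Real.sqrt ((m + 1 : ℕ) : ℝ) = s at *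
      generalize Real.sqrt (m : ℝ) = r at *
      have hexp : ‖c (m + 1) - (1 / s) • g (m + 1) - u‖ ^ 2
          = ‖c (m + 1) - u‖ ^ 2 + 2 * (1 / s) * inner ℝ (g (m + 1)) (u - c (m + 1))
            + (1 / s) ^ 2 * ‖g (m + 1)‖ ^ 2 := by
        have e : c (m + 1) - (1 / s) • g (m + 1) - u
            = (c (m + 1) - u) - (1 / s) • g (m + 1) := by abel
        have e2 : u - c (m + 1) = -(c (m + 1) - u) := by abel
        rw [e, e2, norm_sub_sq_real, inner_smul_right, inner_neg_right, norm_smul,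
          real_inner_comm, mul_pow, Real.norm_eq_abs, sq_abs]
        ring
      have hsq := pow_le_pow_left₀ (norm_nonneg _) hD' 2
      rw [hexp] at hsq
      have hDsq := pow_le_pow_left₀ (norm_nonneg _) hD 2
      have hgsq := pow_le_pow_left₀ (norm_nonneg _) hg 2
      generalize ‖c (m + 1 + 1) - u‖ ^ 2 = D' at *
      generalize ‖c (m + 1) - u‖ ^ 2 = D at *
      generalize ‖g (m + 1)‖ ^ 2 = N at *
      generalize (inner ℝ (g (m + 1)) (u - c (m + 1)) : ℝ) = ip at *
      have h1 : s / 2 * D' ≤ s / 2 * D + ip + 1 / (2 * s) * N := by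
        have := mul_le_mul_of_nonneg_left hsq (by positivity : 0 ≤ s / 2)
        refine this.trans (le_of_eq ?_)
        field_simp
      have h2 : 1 / (2 * s) ≤ s - r := by
        rw [div_le_iff₀ (by positivity)]
        nlinarith [sq_nonneg (s - r)]
      have h3 : 1 / (2 * s) * N ≤ (s - r) * G ^ 2 :=
        (mul_le_mul_of_nonneg_left hgsq (by positivity)).trans
          (mul_le_mul_of_nonneg_right h2 (sq_nonneg G))
      have h4 : (s - r) * D ≤ (s - r) * F ^ 2 :=
        mul_le_mul_of_nonneg_left hDsq (by linarith)
      linarith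
  have := key T le_rfl
  have h5 : 0 ≤ Real.sqrt T / 2 * ‖c (T + 1) - u‖ ^ 2 := by positivity
  linarith
end

section
/- Let H be a real inner product space, let C ⊆ H be a nonempty set, and let P : H → H be a map satisfying: for every z ∈ H, P z ∈ C and ‖P z − u‖ ≤ ‖z − u‖ for all u ∈ C. Let c ∈ C, g ∈ H, η > 0, and set c' = P(c − η g). Then for every u ∈ C, ⟨g, c − u⟩ ≤ ( ‖c − u‖² − ‖c' − u‖² ) / (2η) + (η/2) ‖g‖². -/
/-- Single-step descent inequality for a projected gradient step. -/
theorem stmt7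
    (H : Type*) [NormedAddCommGroup H] [InnerProductSpace ℝ H]
    (C : Set H) (hCne : C.Nonempty)
    (P : H → H) (hPmem : ∀ z, P z ∈ C)
    (hPnonexp : ∀ z, ∀ u ∈ C, ‖P z - u‖ ≤ ‖z - u‖)
    (c : H) (hc : c ∈ C) (g : H) (η : ℝ) (hη : 0 < η) :
    ∀ u ∈ C, (inner ℝ g (c - u) : ℝ)
      ≤ (‖c - u‖ ^ 2 - ‖P (c - η • g) - u‖ ^ 2) / (2 * η)
        + (η / 2) * ‖g‖ ^ 2 := by
  intro u hu
  have h1 := hPnonexp (c - η • g) u hu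
  have h2 : ‖P (c - η • g) - u‖ ^ 2 ≤ ‖(c - η • g) - u‖ ^ 2 :=
    pow_le_pow_left₀ (norm_nonneg _) h1 2
  have h3 : ‖(c - η • g) - u‖ ^ 2
      = ‖c - u‖ ^ 2 - 2 * (η * inner ℝ g (c - u)) + η ^ 2 * ‖g‖ ^ 2 := by
    have e : (c - η • g) - u = (c - u) - η • g := by abel
    rw [e, norm_sub_sq_real, real_inner_smul_right, real_inner_comm, norm_smul, mul_pow,
      Real.norm_eq_abs, sq_abs]
  have h4 : (inner ℝ g (c - u) : ℝ) - (η / 2) * ‖g‖ ^ 2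
      ≤ (‖c - u‖ ^ 2 - ‖P (c - η • g) - u‖ ^ 2) / (2 * η) := by
    rw [le_div_iff₀ (by positivity)]
    nlinarith
  linarith
end
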